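/- arXiv:2311.15178 — 3 statements merged into one kernel-verified Lean document; each statement's English description precedes it below -/
import Mathlib

section
/- For every integer F ≥ 2, s(F, F, 1) = F(F − 1)/2. -/
open scoped Classical

/-- A placement delivery array with parameters `(F, K, Z)` over alphabet `S`:
an `F × K` array of cells that are either empty (`none`) or an element of `S`,
such that each column has exactly `Z` empty cells, no element occurs twice in a
row or in a column, and two equal entries in positions `(j₁,k₁)`, `(j₂,k₂)`
force the cells `(j₁,k₂)` and `(j₂,k₁)` to be empty. -/
def IsPDA {S : Type} (F K Z : ℕ) (A : Fin F → Fin K → Option S) : Prop :=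
  (∀ k : Fin K, (Finset.univ.filter fun j : Fin F => A j k = none).card = Z) ∧
  (∀ (j : Fin F) (k₁ k₂ : Fin K) (t : S), A j k₁ = some t → A j k₂ = some t → k₁ = k₂) ∧
  (∀ (j₁ j₂ : Fin F) (k : Fin K) (t : S), A j₁ k = some t → A j₂ k = some t → j₁ = j₂) ∧
  (∀ (j₁ j₂ : Fin F) (k₁ k₂ : Fin K) (t : S), j₁ ≠ j₂ → k₁ ≠ k₂ →
      A j₁ k₁ = some t → A j₂ k₂ = some t → A j₁ k₂ = none ∧ A j₂ k₁ = none)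

/-- `sPDA F K Z` is the minimum size of an alphabet `S` for which an `S`-PDA with
parameters `(F, K, Z)` exists. -/
noncomputable def sPDA (F K Z : ℕ) : ℕ :=
  sInf {n : ℕ | ∃ A : Fin F → Fin K → Option (Fin n), IsPDA F K Z A}

theorem pda_lower (F n : ℕ) (A : Fin F → Fin F → Option (Fin n)) (h : IsPDA F F 1 A) :
    F * (F - 1) ≤ 2 * n := by
  obtain ⟨h1, h2, h3, h4⟩ := h
  have hcol : ∀ k j₁ j₂, A j₁ k = none → A j₂ k = none → j₁ = j₂ := by
    intro k j₁ j₂ e1 e2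
    have := (Finset.card_le_one.mp (h1 k).le) j₁ (by simp [e1]) j₂ (by simp [e2])
    exact this
  let T : Finset (Fin F × Fin F) := Finset.univ.filter fun p => A p.1 p.2 ≠ none
  have hT : T.card = F * (F - 1) := by
    have e : T.card = ∑ k : Fin F, (Finset.univ.filter fun j : Fin F => A j k ≠ none).card := by
      simp only [T, Finset.card_filter]
      rw [Fintype.sum_prod_type_right]
    rw [e]
    have : ∀ k : Fin F, (Finset.univ.filter fun j : Fin F => A j k ≠ none).card = F - 1 := by
      intro k
      have := Finset.card_filter_add_card_filter_not (s := (Finset.univ : Finset (Fin F)))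
        (fun j : Fin F => A j k = none)
      rw [h1 k, Finset.card_univ, Fintype.card_fin] at this
      simp only [ne_eq]
      omega
    simp [this]
  have key : T.card ≤ 2 * (Finset.univ.image (some : Fin n → Option (Fin n))).card := by
    apply Finset.card_le_mul_card_image_of_maps_to (f := fun p : Fin F × Fin F => A p.1 p.2)
    · intro p hp
      have hp' : A p.1 p.2 ≠ none := by simpa [T] using hp
      obtain ⟨t, ht⟩ := Option.ne_none_iff_exists'.mp hp'
      simp [ht]
    · intro b hb
      obtain ⟨t, -, rfl⟩ := Finset.mem_image.mp hb
      by_contra hc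
      push Not at hc
      obtain ⟨⟨a, a'⟩, ⟨b, b'⟩, ⟨c, c'⟩, ha, hb, hc, hab, hac, hbc⟩ := Finset.two_lt_card_iff.mp hc
      have ha := (Finset.mem_filter.mp ha).2
      have hb := (Finset.mem_filter.mp hb).2
      have hc := (Finset.mem_filter.mp hc).2
      simp only at ha hb hc
      have aux : ∀ {x x' y y' : Fin F}, A x x' = some t → A y y' = some t → (x, x') ≠ (y, y') →
          x ≠ y ∧ x' ≠ y' := by
        intro x x' y y' e1 e2 hne
        constructor
        · rintro rfl
          exact hne (by rw [h2 _ _ _ _ e1 e2])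
        · rintro rfl
          exact hne (by rw [h3 _ _ _ _ e1 e2])
      obtain ⟨p1, p2⟩ := aux ha hb hab
      obtain ⟨q1, q2⟩ := aux ha hc hac
      obtain ⟨r1, r2⟩ := aux hb hc hbc
      exact r1 (hcol a' b c (h4 _ _ _ _ t p1 p2 ha hb).2 (h4 _ _ _ _ t q1 q2 ha hc).2)
  rw [Finset.card_image_of_injective _ (Option.some_injective _), Finset.card_univ,
    Fintype.card_fin, hT] at key
  exact key

theorem pda_upper (F : ℕ) :
    ∃ A : Fin F → Fin F → Option (Fin (F * (F - 1) / 2)), IsPDA F F 1 A := by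
  have hcard : Fintype.card {e : Sym2 (Fin F) // ¬ e.IsDiag} = F * (F - 1) / 2 := by
    rw [Sym2.card_subtype_not_diag, Fintype.card_fin, Nat.choose_two_right]
  let φ := Fintype.equivFinOfCardEq hcard
  let A : Fin F → Fin F → Option (Fin (F * (F - 1) / 2)) := fun i j =>
    if h : i = j then none else some (φ ⟨s(i, j), by simpa using h⟩)
  have hn : ∀ i j, A i j = none ↔ i = j := by
    intro i j
    simp [A]
  have hs : ∀ i j i' j' t, A i j = some t → A i' j' = some t →
      i ≠ j ∧ ((i = i' ∧ j = j') ∨ (i = j' ∧ j = i')) := by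
    intro i j i' j' t e1 e2
    by_cases h : i = j
    · simp [A, h] at e1
    by_cases h' : i' = j'
    · simp [A, h'] at e2
    refine ⟨h, ?_⟩
    simp only [A, h, h', dite_false, Option.some.injEq] at e1 e2
    have := φ.injective (e1.trans e2.symm)
    simpa using this
  refine ⟨A, ?_, ?_, ?_, ?_⟩
  · intro k
    rw [Finset.card_eq_one]
    exact ⟨k, by ext x; simp [hn]⟩
  · intro j k₁ k₂ t e1 e2
    have := hs _ _ _ _ t e1 e2
    grind
  · intro j₁ j₂ k t e1 e2
    have := hs _ _ _ _ t e1 e2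
    grind
  · intro j₁ j₂ k₁ k₂ t hj hk e1 e2
    have := hs _ _ _ _ t e1 e2
    rw [hn, hn]
    grind

theorem stmt_6 (F : ℕ) (hF : 2 ≤ F) :
    sPDA F F 1 = F * (F - 1) / 2 := by
  unfold sPDA
  apply le_antisymm
  · exact Nat.sInf_le (pda_upper F)
  · refine le_csInf (s := {n : ℕ | ∃ A : Fin F → Fin F → Option (Fin n), IsPDA F F 1 A})
      ⟨F * (F - 1) / 2, pda_upper F⟩ ?_
    rintro n ⟨A, hA⟩
    have := pda_lower F n A hA
    omega
end

section
/- Let F, K be positive integers and 0 ≤ Z < F such that (Z + 1) divides K(F − Z). If s(F, K, Z) = K(F − Z)/(Z + 1), then for every integer x with 0 ≤ x < (Z + 1)/(F − Z) and K − x ≥ 1, s(F, K − x, Z) = K(F − Z)/(Z + 1). -/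
open scoped Classical

theorem pda_bound {F K Z n : ℕ} (A : Fin F → Fin K → Option (Fin n)) (h : IsPDA F K Z A) :
    K * (F - Z) ≤ n * (Z + 1) := by
  obtain ⟨h1, h2, h3, h4⟩ := h
  let P : Finset (Σ _ : Fin K, Fin F) :=
    Finset.univ.sigma fun k => Finset.univ.filter fun j : Fin F => ¬ A j k = none
  let Q : Fin n → Finset (Σ _ : Fin K, Fin F) := fun t =>
    Finset.univ.filter fun p => A p.2 p.1 = some t
  have hP : P.card = K * (F - Z) := by
    have hk : ∀ k : Fin K, (Finset.univ.filter fun j : Fin F => ¬ A j k = none).card = F - Z := by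
      intro k
      have := Finset.card_filter_add_card_filter_not
        (s := (Finset.univ : Finset (Fin F))) (fun j => A j k = none)
      rw [h1 k, Finset.card_univ, Fintype.card_fin] at this
      omega
    simp only [P, Finset.card_sigma, hk]
    simp
  have hQ : ∀ t, (Q t).card ≤ Z + 1 := by
    intro t
    rcases (Q t).eq_empty_or_nonempty with he | ⟨⟨k0, j0⟩, hp⟩
    · simp [he]
    · have hp' : A j0 k0 = some t := by simpa [Q] using hp
      rw [← h1 k0]
      refine le_trans ?_ (Finset.card_insert_le j0 _)
      refine Finset.card_le_card_of_injOn (fun p => p.2) ?_ ?_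
      · rintro ⟨k, j⟩ hq
        have hq' : A j k = some t := by simpa [Q] using hq
        by_cases hj : j = j0
        · simp [hj]
        · have hk : k ≠ k0 := by
            rintro rfl
            exact hj (h3 _ _ _ _ hq' hp')
          have := (h4 j j0 k k0 t hj hk hq' hp').1
          simp [this]
      · rintro ⟨k, j⟩ hq ⟨k', j'⟩ hq2 hjj
        have hq' : A j k = some t := by simpa [Q] using hq
        have hq2' : A j' k' = some t := by simpa [Q] using hq2
        obtain rfl : j = j' := hjj
        obtain rfl := h2 _ _ _ _ hq' hq2'
        rfl
  have hsub : P ⊆ Finset.univ.biUnion Q := by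
    rintro ⟨k, j⟩ hp
    have hp' : ¬ A j k = none := by simpa [P] using hp
    obtain ⟨t, ht⟩ := Option.ne_none_iff_exists'.mp hp'
    simp only [Finset.mem_biUnion]
    exact ⟨t, Finset.mem_univ _, by simpa [Q] using ht⟩
  have := Finset.card_biUnion_le_card_mul Finset.univ Q (Z + 1) (fun t _ => hQ t)
  rw [Finset.card_univ, Fintype.card_fin] at this
  rw [← hP]
  exact (Finset.card_le_card hsub).trans this

theorem stmt_10 (F K Z : ℕ) (hF : 0 < F) (hK : 0 < K) (hZ : Z < F)
    (hdvd : (Z + 1) ∣ K * (F - Z))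
    (hs : sPDA F K Z = K * (F - Z) / (Z + 1)) :
    ∀ x : ℕ, (x : ℚ) < ((Z : ℚ) + 1) / ((F - Z : ℕ) : ℚ) → 1 ≤ K - x →
      sPDA F (K - x) Z = K * (F - Z) / (Z + 1) := by
  intro x hx hKx
  have hFZ : 0 < F - Z := Nat.sub_pos_of_lt hZ
  have hx' : x * (F - Z) < Z + 1 := by
    rw [lt_div_iff₀ (by exact_mod_cast hFZ)] at hx
    exact_mod_cast hx
  obtain ⟨m, hm⟩ := hdvd
  have hdiv : K * (F - Z) / (Z + 1) = m := by
    rw [hm]; exact Nat.mul_div_cancel_left m (Nat.succ_pos Z)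
  rw [hdiv] at hs ⊢
  have hmpos : 0 < m := by
    rcases Nat.eq_zero_or_pos m with h0 | h0
    · have := Nat.mul_pos hK hFZ
      rw [hm, h0] at this
      simp at this
    · exact h0
  have hne : {n : ℕ | ∃ A : Fin F → Fin K → Option (Fin n), IsPDA F K Z A}.Nonempty := by
    apply Nat.nonempty_of_pos_sInf
    change 0 < sPDA F K Z
    omega
  have hmem := Nat.sInf_mem hne
  change sPDA F K Z ∈ _ at hmem
  rw [hs] at hmem
  obtain ⟨A, hA1, hA2, hA3, hA4⟩ := hmem
  let e : Fin (K - x) → Fin K := Fin.castLE (Nat.sub_le K x)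
  have he : Function.Injective e := Fin.castLE_injective _
  have hmem' : m ∈ {n : ℕ | ∃ A : Fin F → Fin (K - x) → Option (Fin n), IsPDA F (K - x) Z A} :=
    ⟨fun j k => A j (e k), fun k => hA1 (e k),
      fun j k₁ k₂ t h h' => he (hA2 _ _ _ _ h h'),
      fun j₁ j₂ k t h h' => hA3 _ _ _ _ h h',
      fun j₁ j₂ k₁ k₂ t hj hk h h' => hA4 _ _ _ _ t hj (fun hh => hk (he hh)) h h'⟩
  apply le_antisymm
  · exact Nat.sInf_le hmem'
  · obtain ⟨B, hB⟩ := Nat.sInf_mem ⟨m, hmem'⟩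
    have hb := pda_bound B hB
    change _ ≤ sPDA F (K - x) Z * (Z + 1) at hb
    rw [Nat.sub_mul, hm] at hb
    by_contra hlt
    have h5 : sPDA F (K - x) Z + 1 ≤ m := by omega
    have h6 := Nat.mul_le_mul_right (Z + 1) h5
    rw [Nat.add_mul, Nat.mul_comm m] at h6
    omega
end

section
/- For all integers K and t with K > t > 1, s(C(K, t), K, C(K−1, t−1)) = C(K, t+1) = C(K, t)·(K − t)/(t + 1). -/
open scoped Classical

lemma perm_min_card (K : ℕ) (T : Finset (Fin K)) (x : Fin K) (hx : x ∈ T) :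
    T.card * (Finset.univ.filter fun p : Equiv.Perm (Fin K) => ∀ y ∈ T, p x ≤ p y).card
      = K.factorial := by
  have hsym : ∀ z ∈ T,
      (Finset.univ.filter fun p : Equiv.Perm (Fin K) => ∀ y ∈ T, p z ≤ p y).card =
      (Finset.univ.filter fun p : Equiv.Perm (Fin K) => ∀ y ∈ T, p x ≤ p y).card := by
    intro z hz
    have hT : ∀ y ∈ T, Equiv.swap z x y ∈ T := by
      intro y hy
      rw [Equiv.swap_apply_def]
      split_ifs <;> assumption
    refine Finset.card_bij' (fun p _ => p * Equiv.swap z x) (fun p _ => p * Equiv.swap z x)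
      ?_ ?_ ?_ ?_
    · intro p hp
      simp only [Finset.mem_filter, Finset.mem_univ, true_and] at hp ⊢
      intro y hy
      simpa using hp _ (hT y hy)
    · intro p hp
      simp only [Finset.mem_filter, Finset.mem_univ, true_and] at hp ⊢
      intro y hy
      simpa using hp _ (hT y hy)
    · intro p _
      simp [mul_assoc]
    · intro p _
      simp [mul_assoc]
  calc _ = ∑ z ∈ T,
        (Finset.univ.filter fun p : Equiv.Perm (Fin K) => ∀ y ∈ T, p z ≤ p y).card := by
        rw [Finset.sum_congr rfl hsym]; simp
    _ = ∑ p : Equiv.Perm (Fin K), (T.filter fun z => ∀ y ∈ T, p z ≤ p y).card := by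
        simp only [Finset.card_filter]
        rw [Finset.sum_comm]
    _ = ∑ p : Equiv.Perm (Fin K), 1 := by
        refine Finset.sum_congr rfl fun p _ => ?_
        obtain ⟨z, hz, hmin⟩ := Finset.exists_min_image T p ⟨x, hx⟩
        rw [Finset.card_eq_one]
        refine ⟨z, ?_⟩
        ext w
        simp only [Finset.mem_filter, Finset.mem_singleton]
        constructor
        · rintro ⟨hw, h⟩
          exact p.injective (le_antisymm (h z hz) (hmin w hw))
        · rintro rfl
          exact ⟨hz, hmin⟩
    _ = K.factorial := by simp [Fintype.card_perm]

lemma cells_le (F K Z n : ℕ) (A : Fin F → Fin K → Option (Fin n)) (hA : IsPDA F K Z A)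
    (p : Equiv.Perm (Fin K)) :
    (Finset.univ.filter fun c : Fin F × Fin K =>
      A c.1 c.2 ≠ none ∧ ∀ k', A c.1 k' = none → p c.2 ≤ p k').card ≤ n := by
  obtain ⟨-, hr, hc, hx⟩ := hA
  have key := Finset.card_le_card_of_injOn (s := Finset.univ.filter fun c : Fin F × Fin K =>
      A c.1 c.2 ≠ none ∧ ∀ k', A c.1 k' = none → p c.2 ≤ p k')
    (t := (Finset.univ : Finset (Fin n)).image some) (fun c => A c.1 c.2) ?_ ?_
  · refine key.trans (Finset.card_image_le.trans (by simp))
  · intro c hc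
    simp only [Finset.coe_filter, Finset.mem_univ, true_and, Set.mem_ofPred_eq] at hc
    obtain ⟨s, hs⟩ := Option.ne_none_iff_exists'.1 hc.1
    simp [hs]
  · rintro ⟨j₁, k₁⟩ h1 ⟨j₂, k₂⟩ h2 h
    simp only [Finset.coe_filter, Finset.mem_univ, true_and, Set.mem_ofPred_eq] at h1 h2 h
    obtain ⟨s, hs⟩ := Option.ne_none_iff_exists'.1 h1.1
    have hs2 := h.symm.trans hs
    by_cases hj : j₁ = j₂
    · subst hj
      rw [hr _ _ _ _ hs hs2]
    by_cases hk : k₁ = k₂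
    · subst hk
      exact absurd (hc _ _ _ _ hs hs2) hj
    obtain ⟨e1, e2⟩ := hx _ _ _ _ _ hj hk hs hs2
    exact absurd (p.injective (le_antisymm (h1.2 _ e1) (h2.2 _ e2))) hk

lemma lower (F K Z n : ℕ) (A : Fin F → Fin K → Option (Fin n)) (hA : IsPDA F K Z A) :
    ∑ j : Fin F, ((K : ℚ) + 1) /
      (((Finset.univ.filter fun k : Fin K => A j k = none).card : ℚ) + 1) - F ≤ n := by
  have h1 : ∑ p : Equiv.Perm (Fin K), (Finset.univ.filter fun c : Fin F × Fin K =>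
      A c.1 c.2 ≠ none ∧ ∀ k', A c.1 k' = none → p c.2 ≤ p k').card ≤ K.factorial * n := by
    refine (Finset.sum_le_sum fun p _ => cells_le F K Z n A hA p).trans ?_
    simp [Fintype.card_perm]
  have h2 : ∑ p : Equiv.Perm (Fin K), (Finset.univ.filter fun c : Fin F × Fin K =>
      A c.1 c.2 ≠ none ∧ ∀ k', A c.1 k' = none → p c.2 ≤ p k').card =
      ∑ j : Fin F, ∑ k : Fin K, if A j k ≠ none then
        (Finset.univ.filter fun p : Equiv.Perm (Fin K) =>
          ∀ k', A j k' = none → p k ≤ p k').card else 0 := by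
    simp only [Finset.card_filter]
    rw [Finset.sum_comm, Fintype.sum_prod_type]
    refine Finset.sum_congr rfl fun j _ => Finset.sum_congr rfl fun k _ => ?_
    by_cases h : A j k = none <;> simp [h]
  have hf : (0 : ℚ) < K.factorial := by exact_mod_cast K.factorial_pos
  have h3 : ∀ j : Fin F, ((∑ k : Fin K, if A j k ≠ none then
        (Finset.univ.filter fun p : Equiv.Perm (Fin K) =>
          ∀ k', A j k' = none → p k ≤ p k').card else 0 : ℕ) : ℚ) =
      K.factorial * (((K : ℚ) + 1) /
      (((Finset.univ.filter fun k : Fin K => A j k = none).card : ℚ) + 1) - 1) := by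
    intro j
    set E := Finset.univ.filter fun k : Fin K => A j k = none with hE
    have h4 : ∀ k : Fin K, ((if A j k ≠ none then
        (Finset.univ.filter fun p : Equiv.Perm (Fin K) =>
          ∀ k', A j k' = none → p k ≤ p k').card else 0 : ℕ) : ℚ) =
        if A j k ≠ none then (K.factorial : ℚ) / (E.card + 1) else 0 := by
      intro k
      split_ifs with h
      · have hk : k ∉ E := by simpa [hE] using h
        have := perm_min_card K (insert k E) k (Finset.mem_insert_self _ _)
        rw [Finset.card_insert_of_notMem hk] at this
        have h5 : (Finset.univ.filter fun p : Equiv.Perm (Fin K) =>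
          ∀ k', A j k' = none → p k ≤ p k') = (Finset.univ.filter fun p : Equiv.Perm (Fin K) =>
          ∀ y ∈ insert k E, p k ≤ p y) := by
          ext p
          simp [hE]
        rw [h5, eq_div_iff (by positivity), ← this]
        push_cast
        ring
      · simp
    rw [Nat.cast_sum, Finset.sum_congr rfl fun k _ => h4 k, ← Finset.sum_filter,
      Finset.sum_const, nsmul_eq_mul]
    have h6 := Finset.card_filter_add_card_filter_not (s := (Finset.univ : Finset (Fin K)))
      (fun k => A j k = none)
    rw [← hE, Finset.card_univ, Fintype.card_fin] at h6
    have h7 : (K : ℚ) = E.card + (Finset.univ.filter fun k : Fin K => A j k ≠ none).card := by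
      exact_mod_cast h6.symm
    have h8 : (E.card : ℚ) + 1 ≠ 0 := by positivity
    field_simp
    rw [h7]
    ring
  rw [h2] at h1
  have h9 : ((∑ j : Fin F, ∑ k : Fin K, if A j k ≠ none then
        (Finset.univ.filter fun p : Equiv.Perm (Fin K) =>
          ∀ k', A j k' = none → p k ≤ p k').card else 0 : ℕ) : ℚ) ≤ K.factorial * n := by
    exact_mod_cast h1
  rw [Nat.cast_sum, Finset.sum_congr rfl fun j _ => h3 j, ← Finset.mul_sum] at h9
  have := le_of_mul_le_mul_left h9 hf
  simpa [Finset.sum_sub_distrib] using this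

lemma sum_empty (F K Z n : ℕ) (A : Fin F → Fin K → Option (Fin n)) (hA : IsPDA F K Z A) :
    ∑ j : Fin F, (Finset.univ.filter fun k : Fin K => A j k = none).card = K * Z := by
  simp only [Finset.card_filter]
  rw [Finset.sum_comm]
  simp only [← Finset.card_filter]
  rw [Finset.sum_congr rfl fun k _ => hA.1 k]
  simp

lemma lower' (K t n : ℕ) (ht : 1 < t) (hK : t < K)
    (A : Fin (K.choose t) → Fin K → Option (Fin n))
    (hA : IsPDA (K.choose t) K ((K - 1).choose (t - 1)) A) : K.choose (t + 1) ≤ n := by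
  have h1 := lower _ _ _ _ A hA
  have h2 := sum_empty _ _ _ _ A hA
  have h3 : K * (K - 1).choose (t - 1) = K.choose t * t := by
    obtain ⟨K, rfl⟩ : ∃ m, K = m + 1 := ⟨K - 1, by omega⟩
    obtain ⟨t, rfl⟩ : ∃ m, t = m + 1 := ⟨t - 1, by omega⟩
    exact Nat.add_one_mul_choose_eq K t
  have h4 : ((K.choose (t + 1) : ℕ) : ℚ) * (t + 1) = K.choose t * (K - t) := by
    have := Nat.choose_succ_right_eq K t
    have h : ((K.choose (t + 1) * (t + 1) : ℕ) : ℚ) = (K.choose t * (K - t) : ℕ) := by rw [this]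
    push_cast [Nat.cast_sub hK.le] at h
    exact h
  rw [h3] at h2
  have h5 : ∑ j : Fin (K.choose t), ((Finset.univ.filter fun k : Fin K => A j k = none).card : ℚ)
      = K.choose t * t := by exact_mod_cast h2
  have h6 : ∀ e : ℚ, 0 ≤ e → ((K : ℚ) + 1) * (2 / (t + 1)) - ((K : ℚ) + 1) / (t + 1) ^ 2 * (e + 1)
      ≤ ((K : ℚ) + 1) / (e + 1) := by
    intro e he
    have a : (0 : ℚ) < e + 1 := by positivity
    have b : (0 : ℚ) < (t : ℚ) + 1 := by positivity
    have : ((K : ℚ) + 1) / (e + 1) - (((K : ℚ) + 1) * (2 / (t + 1))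
        - ((K : ℚ) + 1) / (t + 1) ^ 2 * (e + 1))
        = ((K : ℚ) + 1) * (e - t) ^ 2 / ((e + 1) * (t + 1) ^ 2) := by
      field_simp
      ring
    have c : 0 ≤ ((K : ℚ) + 1) * (e - t) ^ 2 / ((e + 1) * (t + 1) ^ 2) := by positivity
    linarith
  have h7 := Finset.sum_le_sum fun (j : Fin (K.choose t)) (_ : j ∈ Finset.univ) =>
    h6 ((Finset.univ.filter fun k : Fin K => A j k = none).card : ℚ) (by positivity)
  rw [Finset.sum_sub_distrib, ← Finset.mul_sum, ← Finset.mul_sum, Finset.sum_add_distrib, h5] at h7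
  simp only [Finset.sum_const, Finset.card_univ, Fintype.card_fin, nsmul_eq_mul] at h7
  have b : (0 : ℚ) < (t : ℚ) + 1 := by positivity
  have h8 : ((K.choose (t + 1) : ℕ) : ℚ) = ((K : ℚ) + 1) * (K.choose t * (2 / (t + 1))) -
      ((K : ℚ) + 1) / (t + 1) ^ 2 * (K.choose t * t + K.choose t * 1) - K.choose t := by
    rw [eq_div_of_mul_eq b.ne' h4]
    field_simp
    ring
  have : ((K.choose (t + 1) : ℕ) : ℚ) ≤ n := by linarith
  exact_mod_cast this

lemma upper (K t : ℕ) (ht : 1 < t) :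
    ∃ A : Fin (K.choose t) → Fin K → Option (Fin (K.choose (t + 1))),
      IsPDA (K.choose t) K ((K - 1).choose (t - 1)) A := by
  let e : Fin (K.choose t) ≃ {T : Finset (Fin K) // T.card = t} :=
    (Fintype.equivFinOfCardEq (by simp)).symm
  let g : {T : Finset (Fin K) // T.card = t + 1} ≃ Fin (K.choose (t + 1)) :=
    Fintype.equivFinOfCardEq (by simp)
  let A : Fin (K.choose t) → Fin K → Option (Fin (K.choose (t + 1))) := fun j k =>
    if h : k ∈ (e j).1 then none else
      some (g ⟨insert k (e j).1, by rw [Finset.card_insert_of_notMem h, (e j).2]⟩)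
  have hn : ∀ j k, A j k = none ↔ k ∈ (e j).1 := by
    intro j k
    by_cases h : k ∈ (e j).1 <;> simp [A, h]
  have hs : ∀ j k s, A j k = some s → k ∉ (e j).1 ∧ insert k (e j).1 = (g.symm s).1 := by
    intro j k s h
    by_cases hk : k ∈ (e j).1
    · simp [A, hk] at h
    · simp only [A, hk, dite_false, Option.some.injEq] at h
      refine ⟨hk, ?_⟩
      rw [← h]; simp
  refine ⟨A, ?_, ?_, ?_, ?_⟩
  · intro k
    have : (Finset.powersetCard (t - 1) (Finset.univ.erase k)).card = (K - 1).choose (t - 1) := by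
      simp
    rw [← this]
    refine Finset.card_bij (fun j _ => (e j).1.erase k) ?_ ?_ ?_
    · intro j hj
      have hj : k ∈ (e j).1 := by simpa [hn] using hj
      rw [Finset.mem_powersetCard]
      refine ⟨Finset.erase_subset_erase _ (Finset.subset_univ _), ?_⟩
      rw [Finset.card_erase_of_mem hj, (e j).2]
    · intro i hi j hj h
      have hi : k ∈ (e i).1 := by simpa [hn] using hi
      have hj : k ∈ (e j).1 := by simpa [hn] using hj
      apply e.injective
      apply Subtype.ext
      rw [← Finset.insert_erase hi, h, Finset.insert_erase hj]
    · intro T hT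
      rw [Finset.mem_powersetCard] at hT
      have hk : k ∉ T := fun h => by simpa using hT.1 h
      refine ⟨e.symm ⟨insert k T, by rw [Finset.card_insert_of_notMem hk, hT.2]; omega⟩, ?_, ?_⟩
      · simp [hn]
      · simp [Finset.erase_insert hk]
  · intro j k₁ k₂ s h1 h2
    obtain ⟨a1, b1⟩ := hs _ _ _ h1
    obtain ⟨a2, b2⟩ := hs _ _ _ h2
    have : k₁ ∈ insert k₂ (e j).1 := by rw [b2, ← b1]; simp
    simpa [a1] using this
  · intro j₁ j₂ k s h1 h2
    obtain ⟨a1, b1⟩ := hs _ _ _ h1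
    obtain ⟨a2, b2⟩ := hs _ _ _ h2
    apply e.injective
    apply Subtype.ext
    rw [← Finset.erase_insert a1, b1, ← b2, Finset.erase_insert a2]
  · intro j₁ j₂ k₁ k₂ s _ hk h1 h2
    obtain ⟨a1, b1⟩ := hs _ _ _ h1
    obtain ⟨a2, b2⟩ := hs _ _ _ h2
    rw [hn, hn]
    constructor
    · have : k₂ ∈ insert k₁ (e j₁).1 := by rw [b1, ← b2]; simp
      simpa [hk.symm] using this
    · have : k₁ ∈ insert k₂ (e j₂).1 := by rw [b2, ← b1]; simp
      simpa [hk] using this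

theorem stmt_19 (K t : ℕ) (ht : 1 < t) (hK : t < K) :
    sPDA (K.choose t) K ((K - 1).choose (t - 1)) = K.choose (t + 1) ∧
    K.choose (t + 1) = K.choose t * (K - t) / (t + 1) := by
  refine ⟨le_antisymm (Nat.sInf_le (upper K t ht)) ?_, ?_⟩
  · refine le_csInf ⟨_, upper K t ht⟩ ?_
    rintro n ⟨A, hA⟩
    exact lower' K t n ht hK A hA
  · rw [← Nat.choose_succ_right_eq, Nat.mul_div_cancel _ (Nat.succ_pos t)]
end
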